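/- If K₁ and K₂ are compact sets in ℂⁿ and p is a holomorphic polynomial on ℂⁿ such that the polynomially convex hulls (in ℂ) of p(K₁) and p(K₂) are disjoint, then the polynomially convex hull of K₁ ∪ K₂ equals K̂₁ ∪ K̂₂, the union of the polynomially convex hulls of K₁ and K₂. -/

import Mathlib

/-!
The key case is a point `z` outside both hulls, which is shown to lie outside the hull of the
union. Pick polynomials `F₁`, `F₂` with value `1` at `z`, small on `K₁` and `K₂` respectively, and
a polynomial `q` in one variable close to `1` on the hull of `p(K₁)` and to `0` on the hull of
`p(K₂)`. With `e = q ∘ p`, the polynomial `F₁ e + F₂ (1 - e)` equals `1` at `z` and is small on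
`K₁ ∪ K₂`.

The polynomial `q` comes from Runge's theorem. By the maximum principle the hull of a bounded subset
of `ℂ` has connected complement, and the union of two disjoint compact sets with connected
complements again has connected complement, since circle-valued maps on `ℂ` lift to `ℝ`. For Runge's
theorem on a compact set `K` with connected complement, the spectrum of the coordinate function in
the uniform algebra `P(K)` generated by the polynomials is `K`, so the Cauchy–Pompeiu formula for a
holomorphic function with a smooth cutoff is an integral of resolvents in `P(K)`.
-/

open Set Filter Topology

noncomputable section

/-- Evaluation of a multivariate polynomial as a function on `ℂⁿ = Fin n → ℂ`. -/
def mvEval {n : ℕ} (p : MvPolynomial (Fin n) ℂ) : (Fin n → ℂ) → ℂ :=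
  fun z => MvPolynomial.eval z p

/-- The polynomially convex hull of a set in `ℂⁿ`. -/
def polyHull {n : ℕ} (K : Set (Fin n → ℂ)) : Set (Fin n → ℂ) :=
  {z | ∀ p : MvPolynomial (Fin n) ℂ, ‖mvEval p z‖ ≤ sSup ((fun w => ‖mvEval p w‖) '' K)}

/-- A set in `ℂⁿ` is polynomially convex if it equals its polynomially convex hull. -/
def IsPolyConvex {n : ℕ} (K : Set (Fin n → ℂ)) : Prop := polyHull K = K

/-- The polynomially convex hull of a subset of `ℂ`. -/
def polyHull1 (F : Set ℂ) : Set ℂ :=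
  {z | ∀ p : Polynomial ℂ, ‖p.eval z‖ ≤ sSup ((fun w => ‖p.eval w‖) '' F)}

/-- A subset of `ℂ` is polynomially convex if it equals its polynomially convex hull. -/
def IsPolyConvex1 (F : Set ℂ) : Prop := polyHull1 F = F

/-- Partial derivative in the `i`-th coordinate direction. -/
def pd {n : ℕ} (i : Fin n) (f : (Fin n → ℂ) → ℂ) : (Fin n → ℂ) → ℂ :=
  fun z => fderiv ℂ f z (Pi.single i 1)

/-- Iterated partial derivative `D^ℓ = ∂^{ℓ₁+⋯+ℓₙ}/∂z₁^{ℓ₁}⋯∂zₙ^{ℓₙ}`. -/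
def Dml {n : ℕ} (ℓ : Fin n → ℕ) (f : (Fin n → ℂ) → ℂ) : (Fin n → ℂ) → ℂ :=
  (List.finRange n).foldr (fun i g => (pd i)^[ℓ i] g) f

/-- Partial sums `S_λ` of a Taylor-type series around `ζ`, with coefficients computed from a
given family `g` of (extended) partial derivatives: the coefficient of the monomial
`(z-ζ)^{N_j}` is `g (N_j) ζ / (N_{j,1}! ⋯ N_{j,n}!)`. -/
def pSumExt {n : ℕ} (Nj : ℕ → Fin n → ℕ) (g : (Fin n → ℕ) → (Fin n → ℂ) → ℂ)
    (ζ : Fin n → ℂ) (lam : ℕ) : (Fin n → ℂ) → ℂ :=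
  fun z => ∑ j ∈ Finset.range (lam + 1),
    (((∏ i, Nat.factorial (Nj j i) : ℕ) : ℂ))⁻¹ * g (Nj j) ζ * ∏ i, (z i - ζ i) ^ (Nj j i)

/-- Partial sums `S_λ(f,ζ)` of the Taylor development of `f` around `ζ`. -/
def pSum {n : ℕ} (Nj : ℕ → Fin n → ℕ) (f : (Fin n → ℂ) → ℂ)
    (ζ : Fin n → ℂ) (lam : ℕ) : (Fin n → ℂ) → ℂ :=
  pSumExt Nj (fun ℓ => Dml ℓ f) ζ lam

/-- The space `O(Ω)` of holomorphic functions on `Ω`. -/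
def Ospace (n : ℕ) (Ω : Set (Fin n → ℂ)) : Type :=
  {f : (Fin n → ℂ) → ℂ // DifferentiableOn ℂ f Ω}

/-- Topology of uniform convergence on compact subsets of `Ω` on `O(Ω)` (the compact-open
topology induced via restriction to `Ω`). -/
instance (n : ℕ) (Ω : Set (Fin n → ℂ)) : TopologicalSpace (Ospace n Ω) :=
  TopologicalSpace.induced
    (fun f : Ospace n Ω =>
      (⟨Ω.restrict f.1, continuousOn_iff_continuous_restrict.mp f.2.continuousOn⟩ : C(Ω, ℂ)))
    inferInstance

/-- Membership in `A^∞(Ω)`: `f` is holomorphic on `Ω` and each partial derivative `D^ℓ f`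
extends continuously to the closure of `Ω`. -/
def AinfMem (n : ℕ) (Ω : Set (Fin n → ℂ)) (f : (Fin n → ℂ) → ℂ) : Prop :=
  DifferentiableOn ℂ f Ω ∧
    ∀ ℓ : Fin n → ℕ, ∃ g : (Fin n → ℂ) → ℂ,
      ContinuousOn g (closure Ω) ∧ Set.EqOn g (Dml ℓ f) Ω

/-- The space `A^∞(Ω)`. -/
def AinfSpace (n : ℕ) (Ω : Set (Fin n → ℂ)) : Type :=
  {f : (Fin n → ℂ) → ℂ // AinfMem n Ω f}

/-- The chosen continuous extension of `D^ℓ f` to the closure of `Ω`, for `f ∈ A^∞(Ω)`.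
(Its restriction to the closure of `Ω` is uniquely determined.) -/
def AinfExt {n : ℕ} {Ω : Set (Fin n → ℂ)} (f : AinfSpace n Ω) (ℓ : Fin n → ℕ) :
    (Fin n → ℂ) → ℂ :=
  Classical.choose (f.2.2 ℓ)

lemma AinfExt_continuousOn {n : ℕ} {Ω : Set (Fin n → ℂ)} (f : AinfSpace n Ω) (ℓ : Fin n → ℕ) :
    ContinuousOn (AinfExt f ℓ) (closure Ω) :=
  (Classical.choose_spec (f.2.2 ℓ)).1

lemma AinfExt_eqOn {n : ℕ} {Ω : Set (Fin n → ℂ)} (f : AinfSpace n Ω) (ℓ : Fin n → ℕ) :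
    Set.EqOn (AinfExt f ℓ) (Dml ℓ f.1) Ω :=
  (Classical.choose_spec (f.2.2 ℓ)).2

/-- Topology on `A^∞(Ω)`: uniform convergence of every partial derivative on every compact
subset of the closure of `Ω`. -/
instance (n : ℕ) (Ω : Set (Fin n → ℂ)) : TopologicalSpace (AinfSpace n Ω) :=
  TopologicalSpace.induced
    (fun f : AinfSpace n Ω => fun ℓ : Fin n → ℕ =>
      (⟨(closure Ω).restrict (AinfExt f ℓ),
        continuousOn_iff_continuous_restrict.mp (AinfExt_continuousOn f ℓ)⟩ :
          C(closure Ω, ℂ)))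
    inferInstance

/-- A smooth compact curve in `ℂⁿ`: the image of an injective `C^∞` map with
nowhere-vanishing derivative, defined on a compact interval (an arc) or on the
circle (a closed curve, modelled by a 1-periodic map). -/
def IsSmoothCompactCurve {n : ℕ} (K : Set (Fin n → ℂ)) : Prop :=
  ∃ γ : ℝ → (Fin n → ℂ), ContDiff ℝ (⊤ : ℕ∞) γ ∧ (∀ t, deriv γ t ≠ 0) ∧ K = γ '' Set.Icc 0 1 ∧
    (Set.InjOn γ (Set.Icc 0 1) ∨ (Function.Periodic γ 1 ∧ Set.InjOn γ (Set.Ico 0 1)))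

/-- A disjoint union of finitely many smooth compact curves. -/
def IsFiniteUnionOfSmoothCurves {n : ℕ} (K : Set (Fin n → ℂ)) : Prop :=
  ∃ (m : ℕ) (C : Fin m → Set (Fin n → ℂ)),
    (∀ i, IsSmoothCompactCurve (C i)) ∧ Pairwise (Function.onFun Disjoint C) ∧ K = ⋃ i, C i

section Unicoherence

variable {E : Type*} [TopologicalSpace E]

lemma frontier_subset_compl_union {P Q : Set E} (hP : IsOpen P) (hQ : IsOpen Q)
    (hPQ : Disjoint P Q) : frontier P ⊆ (P ∪ Q)ᶜ := by
  rw [hP.frontier_eq, compl_union]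
  exact fun x hx ↦ ⟨hx.2, disjoint_left.1 (hPQ.closure_left hQ) hx.1⟩

lemma eq_of_isPreconnected_of_coe_addCircle_eq_zero {s : Set E} {g : E → ℝ} {T : ℝ}
    (hs : IsPreconnected s) (hg : ContinuousOn g s) (hT : ∀ x ∈ s, (g x : AddCircle T) = 0)
    {x y : E} (hx : x ∈ s) (hy : y ∈ s) : g x = g y :=
  hs.constant_of_mapsTo (isDiscrete_iff_discreteTopology.2
    (inferInstance : DiscreteTopology (AddSubgroup.zmultiples T))) hg
    (fun z hz ↦ (QuotientAddGroup.eq_zero_iff (g z)).1 (hT z hz)) hx hy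

lemma sub_eq_of_coe_addCircle_eq_piecewise {P Z : Set E} [DecidablePred (· ∈ P)] {ρ L : E → ℝ}
    (hρ : Continuous ρ) (hL : Continuous L)
    (hlift : ∀ x, (L x : AddCircle (1 : ℝ)) = P.piecewise (fun x ↦ (ρ x : AddCircle (1 : ℝ))) 0 x)
    (hZ : IsPreconnected Zᶜ) (k : ℤ) (hk : ∀ x ∈ frontier P, x ∉ Z → ρ x = k) {a b : E}
    (haP : a ∈ P) (haZ : a ∉ Z) (hbP : b ∉ P) (hbZ : b ∉ Z) : L a - (ρ a - k) = L b := by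
  have hcont : ContinuousOn (P.piecewise (fun x ↦ L x - (ρ x - k)) L) Zᶜ := by
    refine ContinuousOn.piecewise (fun x hx ↦ ?_) (by fun_prop) (by fun_prop)
    simp [hk x hx.2 hx.1]
  have hzero (x : E) : (P.piecewise (fun x ↦ L x - (ρ x - k)) L x : AddCircle (1 : ℝ)) = 0 := by
    by_cases hx : x ∈ P
    · have hk0 : ((k : ℝ) : AddCircle (1 : ℝ)) = 0 := (AddCircle.coe_eq_zero_iff 1).2 ⟨k, by simp⟩
      simp [hx, hlift, hk0]
    · simp [hx, hlift]
  simpa [haP, hbP] using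
    eq_of_isPreconnected_of_coe_addCircle_eq_zero hZ hcont (fun x _ ↦ hzero x) haZ hbZ

/- If `P ⊔ Q` were a separation of `(X ∪ Y)ᶜ`, then a Urysohn function `ρ`, equal to `0` on `X` and
`1` on `Y`, would descend on `P` to a circle-valued map that extends by `0` to `E`. Let `L` be a
real lift of it. Both `L - ρ·1_P` on `Yᶜ` and `L - (ρ - 1)·1_P` on `Xᶜ` are continuous and
integer-valued, hence constant, but they agree on `Q` and differ by `1` on `P`. -/
lemma isPreconnected_compl_union [SimplyConnectedSpace E] [LocallyPathConnectedSpace E]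
    [NormalSpace E] {X Y : Set E} (hX : IsClosed X) (hY : IsClosed Y) (hXY : Disjoint X Y)
    (hXc : IsPreconnected Xᶜ) (hYc : IsPreconnected Yᶜ) : IsPreconnected (X ∪ Y)ᶜ := by
  rintro u v hu hv huv ⟨a, haP⟩ ⟨b, hbQ⟩
  classical
  by_contra hne
  set P := (X ∪ Y)ᶜ ∩ u
  set Q := (X ∪ Y)ᶜ ∩ v
  have hXYo : IsOpen (X ∪ Y)ᶜ := (hX.union hY).isOpen_compl
  have hPQ : Disjoint P Q := disjoint_left.2 fun x hxP hxQ ↦ hne ⟨x, hxP.1, hxP.2, hxQ.2⟩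
  have hfrontier : frontier P ⊆ X ∪ Y := by
    refine (frontier_subset_compl_union (hXYo.inter hu) (hXYo.inter hv) hPQ).trans ?_
    rw [← inter_union_distrib_left, inter_eq_left.2 huv, compl_compl]
  obtain ⟨ρ, hρX, hρY, -⟩ := exists_continuous_zero_one_of_isClosed hX hY hXY
  have hf : Continuous (P.piecewise (fun x ↦ (ρ x : AddCircle (1 : ℝ))) 0) := by
    refine Continuous.piecewise (fun x hx ↦ ?_)
      ((AddCircle.continuous_mk' 1).comp ρ.continuous) continuous_const
    rcases hfrontier hx with h | h
    · simp [hρX h]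
    · simp [hρY h]
  have hb : b ∉ P := disjoint_right.1 hPQ hbQ
  obtain ⟨L, ⟨-, hL⟩, -⟩ := (AddCircle.isCoveringMap_coe (1 : ℝ)).existsUnique_continuousMap_lifts
    ⟨_, hf⟩ b 0 (by simp [hb])
  have hYeq := sub_eq_of_coe_addCircle_eq_piecewise ρ.continuous L.continuous (congrFun hL) hYc 0
    (fun x hx hxY ↦ by simp [hρX ((hfrontier hx).resolve_right hxY)])
    haP (fun h ↦ haP.1 (.inr h)) hb (fun h ↦ hbQ.1 (.inr h))
  have hXeq := sub_eq_of_coe_addCircle_eq_piecewise ρ.continuous L.continuous (congrFun hL) hXc 1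
    (fun x hx hxX ↦ by simp [hρY ((hfrontier hx).resolve_left hxX)])
    haP (fun h ↦ haP.1 (.inl h)) hb (fun h ↦ hbQ.1 (.inl h))
  push_cast at hXeq hYeq
  linarith

end Unicoherence

section Complement

lemma frontier_connectedComponentIn_compl_subset {E : Type*} [TopologicalSpace E]
    [LocallyConnectedSpace E] {K : Set E} (hK : IsClosed K) (a : E) :
    frontier (connectedComponentIn Kᶜ a) ⊆ K := by
  intro x hx
  by_contra hxK
  obtain ⟨y, hyx, hya⟩ := mem_closure_iff.1 (frontier_subset_closure hx) _
    hK.isOpen_compl.connectedComponentIn (mem_connectedComponentIn hxK)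
  rw [hK.isOpen_compl.connectedComponentIn.frontier_eq, connectedComponentIn_eq hya,
    ← connectedComponentIn_eq hyx] at hx
  exact hx.2 (mem_connectedComponentIn hxK)

variable {E : Type*} [NormedAddCommGroup E] [NormedSpace ℝ E]

lemma isPreconnected_compl_closedBall (hE : 1 < Module.rank ℝ E) (x : E) (r : ℝ) :
    IsPreconnected (Metric.closedBall x r)ᶜ := by
  rcases lt_or_ge r 0 with hr | hr
  · simpa [Metric.closedBall_eq_empty.2 hr] using isPreconnected_univ
  have himage : (fun q : ℝ × E ↦ q.1 • q.2 + x) '' (Ioi r ×ˢ Metric.sphere 0 1) =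
      (Metric.closedBall x r)ᶜ := by
    ext y
    simp only [mem_image, mem_prod, mem_Ioi, mem_sphere_zero_iff_norm, mem_compl_iff,
      Metric.mem_closedBall, not_le, dist_eq_norm, Prod.exists]
    constructor
    · rintro ⟨t, u, ⟨ht, hu⟩, rfl⟩
      simpa [norm_smul, hu, abs_of_pos (hr.trans_lt ht)] using ht
    · intro hy
      have hne : ‖y - x‖ ≠ 0 := (hr.trans_lt hy).ne'
      exact ⟨‖y - x‖, ‖y - x‖⁻¹ • (y - x), ⟨hy, by simp [norm_smul, hne]⟩, by simp [smul_smul, hne]⟩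
  rw [← himage]
  exact (isPreconnected_Ioi.prod (isPreconnected_sphere hE 0 1)).image _ (by fun_prop)

lemma isPreconnected_compl_of_not_isBounded (hE : 1 < Module.rank ℝ E) {K : Set E}
    (hK : Bornology.IsBounded K)
    (hunb : ∀ a ∉ K, ¬ Bornology.IsBounded (connectedComponentIn Kᶜ a)) : IsPreconnected Kᶜ := by
  obtain ⟨r, hKr⟩ := hK.subset_closedBall 0
  have houter := isPreconnected_compl_closedBall hE 0 r
  have hmeet (a : E) (ha : a ∉ K) :
      ((Metric.closedBall 0 r)ᶜ ∩ connectedComponentIn Kᶜ a).Nonempty := by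
    rw [inter_comm, inter_compl_nonempty_iff]
    exact fun h ↦ hunb a ha (Metric.isBounded_closedBall.subset h)
  refine isPreconnected_of_forall_pair fun a ha b hb ↦
    ⟨(Metric.closedBall 0 r)ᶜ ∪ connectedComponentIn Kᶜ a ∪ connectedComponentIn Kᶜ b, ?_,
      .inl (.inr (mem_connectedComponentIn ha)), .inr (mem_connectedComponentIn hb), ?_⟩
  · exact union_subset (union_subset (compl_subset_compl.2 hKr) (connectedComponentIn_subset _ _))
      (connectedComponentIn_subset _ _)
  · exact ((houter.union' (hmeet a ha) isPreconnected_connectedComponentIn).union'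
      ((hmeet b hb).mono (inter_subset_inter_left _ subset_union_left))
      isPreconnected_connectedComponentIn)

end Complement

section PolyHull1

lemma isCompact_polyHull1 (A : Set ℂ) : IsCompact (polyHull1 A) := by
  have hclosed : IsClosed (polyHull1 A) := by
    simp only [polyHull1, ofPred_forall]
    exact isClosed_iInter fun p ↦ isClosed_le p.continuous.norm continuous_const
  refine Metric.isCompact_of_isClosed_isBounded hclosed
    (isBounded_iff_forall_norm_le.2 ⟨sSup (norm '' A), fun z hz ↦ ?_⟩)
  simpa using hz Polynomial.X

lemma not_isBounded_connectedComponentIn_compl_polyHull1 {A : Set ℂ} {a : ℂ}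
    (ha : a ∉ polyHull1 A) : ¬ Bornology.IsBounded (connectedComponentIn (polyHull1 A)ᶜ a) :=
  fun hbdd ↦ ha fun p ↦
    Complex.norm_le_of_forall_mem_frontier_norm_le hbdd p.differentiable.diffContOnCl
      (fun _ hz ↦
        frontier_connectedComponentIn_compl_subset (isCompact_polyHull1 A).isClosed a hz p)
      (subset_closure (mem_connectedComponentIn ha))

lemma isPreconnected_compl_polyHull1 (A : Set ℂ) : IsPreconnected (polyHull1 A)ᶜ :=
  isPreconnected_compl_of_not_isBounded (by simp [Complex.rank_real_complex])
    (isCompact_polyHull1 A).isBounded fun _ ↦ not_isBounded_connectedComponentIn_compl_polyHull1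

end PolyHull1

section CauchyPompeiu

open MeasureTheory Complex
open scoped Real ComplexConjugate

lemma integral_Ioi_fderiv_smul {E F : Type*} [NormedAddCommGroup E] [NormedSpace ℝ E]
    [NormedAddCommGroup F] [NormedSpace ℝ F] [CompleteSpace F] {φ : E → F} (hφ : ContDiff ℝ 1 φ)
    (hsupp : HasCompactSupport φ) {v : E} (hv : v ≠ 0) :
    ∫ r in Ioi (0 : ℝ), fderiv ℝ φ (r • v) v = -φ 0 := by
  have hray : HasCompactSupport fun r : ℝ ↦ φ (r • v) :=
    hsupp.comp_isClosedEmbedding (isClosedEmbedding_smul_left hv)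
  have hderiv (r : ℝ) : deriv (fun r : ℝ ↦ φ (r • v)) r = fderiv ℝ φ (r • v) v := by
    have hline : HasDerivAt (fun r : ℝ ↦ r • v) v r := by
      simpa using (hasDerivAt_id r).smul_const v
    exact ((hφ.differentiable one_ne_zero _).hasFDerivAt.comp_hasDerivAt r hline).deriv
  simpa [hderiv] using hray.integral_Ioi_deriv_eq (by fun_prop) 0

variable {F : Type*} [NormedAddCommGroup F] [NormedSpace ℂ F]

/-- The Wirtinger derivative `∂φ/∂z̄ = (∂φ/∂x + i ∂φ/∂y) / 2`. -/
def dbar (φ : ℂ → F) (z : ℂ) : F :=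
  (2⁻¹ : ℂ) • (fderiv ℝ φ z 1 + I • fderiv ℝ φ z I)

lemma two_mul_conj_smul_dbar (φ : ℂ → F) (z v : ℂ) :
    (2 * conj v) • dbar φ z = fderiv ℝ φ z v + I • fderiv ℝ φ z (I * v) := by
  have hv : v = v.re • (1 : ℂ) + v.im • I := by simp
  have hIv : I * v = -(v.im • (1 : ℂ)) + v.re • I := by
    apply Complex.ext <;> simp
  rw [hIv]
  nth_rw 2 [hv]
  have hconj : conj v = v.re - v.im * I := by
    apply Complex.ext <;> simp
  simp only [dbar, map_add, map_neg, map_smul, hconj]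
  simp only [← coe_smul]
  match_scalars
  · ring
  · linear_combination -(v.im : ℂ) * I_sq

lemma continuous_dbar {φ : ℂ → F} (hφ : ContDiff ℝ 1 φ) : Continuous (dbar φ) := by
  have := hφ.continuous_fderiv one_ne_zero
  unfold dbar
  fun_prop

lemma hasCompactSupport_dbar {φ : ℂ → F} (hφ : HasCompactSupport φ) : HasCompactSupport (dbar φ) :=
  (hφ.fderiv (𝕜 := ℝ)).comp_left (g := fun D : ℂ →L[ℝ] F ↦ (2⁻¹ : ℂ) • (D 1 + I • D I)) (by simp)

lemma dbar_comp_add_right (φ : ℂ → F) (a z : ℂ) : dbar (fun w ↦ φ (w + a)) z = dbar φ (z + a) := by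
  simp [dbar, fderiv_comp_add_right]

lemma integrableOn_fderiv_circleMap {φ : ℂ → F} (hφ : ContDiff ℝ 1 φ) (hsupp : HasCompactSupport φ)
    (c : ℂ) : IntegrableOn
      (fun q : ℝ × ℝ ↦ fderiv ℝ φ (circleMap 0 q.1 q.2) (c * circleMap 0 1 q.2))
      (Ioi 0 ×ˢ Ioo (-π) π) := by
  obtain ⟨R, -, hR⟩ := (hsupp.fderiv (𝕜 := ℝ)).exists_pos_le_norm
  have := hφ.continuous_fderiv one_ne_zero
  have hcompact : IntegrableOn
      (fun q : ℝ × ℝ ↦ fderiv ℝ φ (circleMap 0 q.1 q.2) (c * circleMap 0 1 q.2))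
      (Icc 0 R ×ˢ Icc (-π) π) :=
    ContinuousOn.integrableOn_compact (isCompact_Icc.prod isCompact_Icc)
      (by unfold circleMap; fun_prop)
  refine hcompact.of_forall_sdiff_eq_zero (measurableSet_Ioi.prod measurableSet_Ioo) fun q hq ↦ ?_
  have hRq : R ≤ q.1 :=
    not_lt.1 fun hlt ↦ hq.2 ⟨⟨le_of_lt hq.1.1, hlt.le⟩, Ioo_subset_Icc_self hq.1.2⟩
  have hzero : fderiv ℝ φ (circleMap 0 q.1 q.2) = 0 :=
    hR _ (by simpa using hRq.trans (le_abs_self _))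
  simp [hzero]

variable [CompleteSpace F]

lemma integral_fderiv_circleMap_radial {φ : ℂ → F} (hφ : ContDiff ℝ 1 φ)
    (hsupp : HasCompactSupport φ) :
    ∫ q in Ioi (0 : ℝ) ×ˢ Ioo (-π) π, fderiv ℝ φ (circleMap 0 q.1 q.2) (circleMap 0 1 q.2) =
      -(2 * π) • φ 0 := by
  have hint := integrableOn_fderiv_circleMap hφ hsupp 1
  simp only [one_mul] at hint
  have hray (θ : ℝ) :
      ∫ r in Ioi (0 : ℝ), fderiv ℝ φ (circleMap 0 r θ) (circleMap 0 1 θ) = -φ 0 := by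
    have := integral_Ioi_fderiv_smul hφ hsupp (circleMap_ne_center (c := 0) (θ := θ) one_ne_zero)
    simpa [circleMap] using this
  calc ∫ q in Ioi (0 : ℝ) ×ˢ Ioo (-π) π, fderiv ℝ φ (circleMap 0 q.1 q.2) (circleMap 0 1 q.2)
      = ∫ θ in Ioo (-π) π, ∫ r in Ioi (0 : ℝ),
          fderiv ℝ φ (circleMap 0 r θ) (circleMap 0 1 θ) := by
        rw [Measure.volume_eq_prod, ← setIntegral_prod_swap]
        exact setIntegral_prod _ hint.swap
    _ = -(2 * π) • φ 0 := by
        simp [hray, Real.pi_pos.le, two_mul, neg_add_rev, add_smul]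

lemma integral_fderiv_circleMap_angular {φ : ℂ → F} (hφ : ContDiff ℝ 1 φ) {r : ℝ} (hr : r ≠ 0) :
    ∫ θ in Ioo (-π) π, fderiv ℝ φ (circleMap 0 r θ) (I * circleMap 0 1 θ) = 0 := by
  have hderiv (θ : ℝ) : HasDerivAt (fun θ ↦ r⁻¹ • φ (circleMap 0 r θ))
      (fderiv ℝ φ (circleMap 0 r θ) (I * circleMap 0 1 θ)) θ := by
    have hr' : (r : ℂ) ≠ 0 := ofReal_ne_zero.2 hr
    have hdir : I * circleMap 0 1 θ = r⁻¹ • (circleMap 0 r θ * I) := by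
      simp only [circleMap, real_smul, ofReal_inv, ofReal_one]
      field_simp
      ring
    rw [hdir, map_smul]
    exact ((hφ.differentiable one_ne_zero _).hasFDerivAt.comp_hasDerivAt θ
      (hasDerivAt_circleMap 0 r θ)).const_smul r⁻¹
  have := hφ.continuous_fderiv one_ne_zero
  rw [← integral_Ioc_eq_integral_Ioo, ← intervalIntegral.integral_of_le (by linarith [Real.pi_pos]),
    intervalIntegral.integral_eq_sub_of_hasDerivAt (fun θ _ ↦ hderiv θ)
      (Continuous.intervalIntegrable (by fun_prop) _ _)]
  have hper : circleMap 0 r π = circleMap 0 r (-π) := by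
    simpa [two_mul] using periodic_circleMap 0 r (-π)
  simp [hper]

/- In polar coordinates `w⁻¹ ∂̄φ dA` is half the sum of a radial derivative of `φ`, which integrates
along each ray, and `i` times an angular derivative, which integrates to `0` over each circle. -/
lemma integral_inv_smul_dbar {φ : ℂ → F} (hφ : ContDiff ℝ 1 φ) (hsupp : HasCompactSupport φ) :
    ∫ w, w⁻¹ • dbar φ w = -(π : ℂ) • φ 0 := by
  have hint (c : ℂ) := integrableOn_fderiv_circleMap hφ hsupp c
  have hint_radial : IntegrableOn (fun q : ℝ × ℝ ↦ fderiv ℝ φ (circleMap 0 q.1 q.2)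
      (circleMap 0 1 q.2)) (Ioi 0 ×ˢ Ioo (-π) π) := by simpa using hint 1
  have hpolar : ∀ q ∈ Ioi (0 : ℝ) ×ˢ Ioo (-π) π,
      q.1 • (Complex.polarCoord.symm q)⁻¹ • dbar φ (Complex.polarCoord.symm q) =
        (2⁻¹ : ℂ) • (fderiv ℝ φ (circleMap 0 q.1 q.2) (circleMap 0 1 q.2) +
          I • fderiv ℝ φ (circleMap 0 q.1 q.2) (I * circleMap 0 1 q.2)) := by
    intro q hq
    have hr : (q.1 : ℂ) ≠ 0 := ofReal_ne_zero.2 (ne_of_gt hq.1)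
    have hsymm : Complex.polarCoord.symm q = q.1 * circleMap 0 1 q.2 := by
      simp [circleMap, exp_mul_I]
    have hconj : (circleMap 0 1 q.2)⁻¹ = conj (circleMap 0 1 q.2) := inv_eq_conj (by simp)
    rw [← two_mul_conj_smul_dbar, hsymm, ← hconj, ← coe_smul, smul_smul, smul_smul]
    congr 1
    · field_simp
    · simp [circleMap]
  have hangular : ∫ q in Ioi (0 : ℝ) ×ˢ Ioo (-π) π,
      fderiv ℝ φ (circleMap 0 q.1 q.2) (I * circleMap 0 1 q.2) = 0 := by
    rw [Measure.volume_eq_prod, setIntegral_prod _ (hint I)]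
    exact setIntegral_eq_zero_of_forall_eq_zero fun r hr ↦
      integral_fderiv_circleMap_angular hφ (ne_of_gt hr)
  rw [← Complex.integral_comp_polarCoord_symm, polarCoord_target,
    setIntegral_congr_fun (measurableSet_Ioi.prod measurableSet_Ioo) hpolar, integral_smul,
    integral_add hint_radial ((hint I).fun_smul I), integral_smul, hangular,
    integral_fderiv_circleMap_radial hφ hsupp, ← coe_smul]
  match_scalars
  simp

theorem integral_inv_sub_smul_dbar {φ : ℂ → F} (hφ : ContDiff ℝ 1 φ) (hsupp : HasCompactSupport φ)
    (z : ℂ) : ∫ w, (w - z)⁻¹ • dbar φ w = -(π : ℂ) • φ z := by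
  have htranslate := integral_inv_smul_dbar (φ := fun w ↦ φ (w + z)) (by fun_prop)
    (hsupp.comp_homeomorph (Homeomorph.addRight z))
  rw [← integral_add_right_eq_self _ z]
  simpa [dbar_comp_add_right] using htranslate

end CauchyPompeiu

section Runge

open MeasureTheory Complex
open scoped Real

lemma exists_contDiff_hasCompactSupport_eventuallyEq {E F : Type*} [NormedAddCommGroup E]
    [NormedSpace ℝ E] [FiniteDimensional ℝ E] [NormedAddCommGroup F] [NormedSpace ℝ F] {n : ℕ∞}
    {K U : Set E} {f : E → F} (hK : IsCompact K) (hU : IsOpen U) (hKU : K ⊆ U)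
    (hf : ContDiffOn ℝ n f U) :
    ∃ φ : E → F, ContDiff ℝ n φ ∧ HasCompactSupport φ ∧ φ =ᶠ[𝓝ˢ K] f := by
  obtain ⟨L, hL, hKL, hLU⟩ := exists_compact_between hK hU hKU
  obtain ⟨χ, hχK, hχL, -⟩ := exists_contMDiffMap_one_nhds_of_subset_interior (n := n)
    (modelWithCornersSelf ℝ E) hK.isClosed hKL
  refine ⟨fun x ↦ χ x • f x, contDiff_iff_contDiffAt.2 fun x ↦ ?_,
    HasCompactSupport.intro hL fun x hx ↦ by simp [hχL x hx], ?_⟩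
  · by_cases hx : x ∈ L
    · exact χ.contMDiff.contDiff.contDiffAt.smul (hf.contDiffAt (hU.mem_nhds (hLU hx)))
    · refine contDiffAt_const (c := 0) |>.congr_of_eventuallyEq ?_
      filter_upwards [hL.isClosed.isOpen_compl.mem_nhds hx] with y hy
      simp [hχL y hy]
  · filter_upwards [hχK] with x hx
    simp [hx]

lemma dbar_eq_zero_of_eventuallyEq {F : Type*} [NormedAddCommGroup F] [NormedSpace ℂ F]
    {φ f : ℂ → F} {z : ℂ} (hf : DifferentiableAt ℂ f z) (h : φ =ᶠ[𝓝 z] f) : dbar φ z = 0 := by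
  have hI : fderiv ℂ f z I = I • fderiv ℂ f z 1 := by
    rw [← map_smul]
    simp
  simp [dbar, h.fderiv_eq, hf.fderiv_restrictScalars ℝ, hI, smul_smul]

variable {K : Set ℂ} [CompactSpace K]

/-- The uniform closure of the polynomials in `C(K, ℂ)`, usually denoted `P(K)`. -/
abbrev polynomialClosure (K : Set ℂ) [CompactSpace K] : Subalgebra ℂ C(K, ℂ) :=
  (polynomialFunctions K).topologicalClosure

/-- The coordinate function of `K`, as an element of `P(K)`. -/
def coordinate (K : Set ℂ) [CompactSpace K] : polynomialClosure K :=
  ⟨Polynomial.toContinuousMapOnAlgHom K Polynomial.X,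
    (polynomialFunctions K).le_topologicalClosure ⟨_, trivial, rfl⟩⟩

local instance : IsClosed (polynomialClosure K : Set C(K, ℂ)) :=
  (polynomialFunctions K).isClosed_topologicalClosure

local instance : CompleteSpace (polynomialClosure K) :=
  (polynomialFunctions K).isClosed_topologicalClosure.completeSpace_coe

lemma resolventSet_coordinate (hK : IsPreconnected Kᶜ) : resolventSet ℂ (coordinate K) = Kᶜ := by
  have hspec : spectrum ℂ (coordinate K : C(K, ℂ)) = K := by
    rw [ContinuousMap.spectrum_eq_range]
    ext z
    simp [coordinate]
  rw [← compl_compl (resolventSet ℂ (coordinate K))]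
  exact congrArg compl
    ((Subalgebra.spectrum_eq_of_isPreconnected_compl _ _ (by rwa [hspec])).trans hspec)

lemma resolvent_coordinate_apply {w : ℂ} (hw : w ∈ resolventSet ℂ (coordinate K)) (z : K) :
    (resolvent (coordinate K) w).1 z = (w - z)⁻¹ := by
  have hmul := congrArg (fun g : polynomialClosure K ↦ g.1 z)
    (Ring.inverse_mul_cancel _ hw)
  exact eq_inv_of_mul_eq_one_left (by simpa [resolvent, coordinate] using hmul)

lemma continuous_dbar_smul_resolvent (hK : IsPreconnected Kᶜ) {φ : ℂ → ℂ} (hφ : ContDiff ℝ 1 φ)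
    (hdbar : ∀ z ∈ K, dbar φ =ᶠ[𝓝 z] 0) :
    Continuous fun w ↦ dbar φ w • resolvent (coordinate K) w := by
  refine continuous_iff_continuousAt.2 fun w ↦ ?_
  by_cases hw : w ∈ K
  · refine continuousAt_const (y := 0) |>.congr ?_
    filter_upwards [hdbar w hw] with v hv
    simp [hv]
  · exact (continuous_dbar hφ).continuousAt.smul
      (spectrum.hasDerivAt_resolvent_const_left (by rwa [resolventSet_coordinate hK])).continuousAt

lemma integral_dbar_smul_resolvent_apply (hK : IsPreconnected Kᶜ) {φ : ℂ → ℂ}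
    (hφ : ContDiff ℝ 1 φ) (hsupp : HasCompactSupport φ) (hdbar : ∀ z ∈ K, dbar φ =ᶠ[𝓝 z] 0)
    (z : K) : (∫ w, dbar φ w • resolvent (coordinate K) w).1 z = -(π : ℂ) * φ z := by
  let ev : polynomialClosure K →L[ℂ] ℂ :=
    (ContinuousMap.evalCLM ℂ z).comp (polynomialClosure K).toSubmodule.subtypeL
  have hint : Integrable fun w ↦ dbar φ w • resolvent (coordinate K) w :=
    (continuous_dbar_smul_resolvent hK hφ hdbar).integrable_of_hasCompactSupport
      (hasCompactSupport_dbar hsupp).smul_right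
  have hev (w : ℂ) : ev (dbar φ w • resolvent (coordinate K) w) = (w - z)⁻¹ • dbar φ w := by
    by_cases hw : w ∈ K
    · simp [(hdbar w hw).eq_of_nhds]
    · rw [map_smul, smul_eq_mul, smul_eq_mul, mul_comm]
      exact congrArg (· * dbar φ w)
        (resolvent_coordinate_apply (by rwa [resolventSet_coordinate hK]) z)
  calc (∫ w, dbar φ w • resolvent (coordinate K) w).1 z
      = ∫ w, (w - z : ℂ)⁻¹ • dbar φ w := by
        simp only [← hev]
        exact (ev.integral_comp_comm hint).symm
    _ = -(π : ℂ) * φ z := integral_inv_sub_smul_dbar hφ hsupp z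

lemma exists_polynomialClosure_eq (hK : IsPreconnected Kᶜ) {U : Set ℂ} (hU : IsOpen U)
    (hKU : K ⊆ U) {f : ℂ → ℂ} (hf : DifferentiableOn ℂ f U) :
    ∃ g : polynomialClosure K, ∀ z : K, g.1 z = f z := by
  obtain ⟨φ, hφ, hsupp, hφf⟩ := exists_contDiff_hasCompactSupport_eventuallyEq (n := 1)
    (isCompact_iff_compactSpace.2 ‹_›) hU hKU ((hf.contDiffOn hU).restrict_scalars ℝ)
  have hφf (z : ℂ) (hz : z ∈ K) : φ =ᶠ[𝓝 z] f := eventually_nhdsSet_iff_forall.1 hφf z hz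
  have hdbar (z : ℂ) (hz : z ∈ K) : dbar φ =ᶠ[𝓝 z] 0 := by
    filter_upwards [(hφf z hz).eventually_nhds, hU.mem_nhds (hKU hz)] with w hw hwU
    exact dbar_eq_zero_of_eventuallyEq (hf.differentiableAt (hU.mem_nhds hwU)) hw
  refine ⟨(-(π : ℂ)⁻¹) • ∫ w, dbar φ w • resolvent (coordinate K) w, fun z ↦ ?_⟩
  calc (-(π : ℂ)⁻¹) * (∫ w, dbar φ w • resolvent (coordinate K) w).1 z
      = -(π : ℂ)⁻¹ * (-(π : ℂ) * φ z) := by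
        rw [integral_dbar_smul_resolvent_apply hK hφ hsupp hdbar]
    _ = f z := by
        simp [(hφf z z.2).eq_of_nhds, Real.pi_ne_zero]

theorem exists_polynomial_norm_sub_lt {K U : Set ℂ} (hK : IsCompact K)
    (hKc : IsPreconnected Kᶜ) (hU : IsOpen U) (hKU : K ⊆ U) {f : ℂ → ℂ}
    (hf : DifferentiableOn ℂ f U) {ε : ℝ} (hε : 0 < ε) :
    ∃ q : Polynomial ℂ, ∀ z ∈ K, ‖q.eval z - f z‖ < ε := by
  have := isCompact_iff_compactSpace.1 hK
  obtain ⟨⟨g, hg⟩, hgf⟩ := exists_polynomialClosure_eq hKc hU hKU hf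
  obtain ⟨h, hh, hdist⟩ := Metric.mem_closure_iff.1 hg ε hε
  obtain ⟨q, -, rfl⟩ := hh
  refine ⟨q, fun z hz ↦ ?_⟩
  rw [← hgf ⟨z, hz⟩, ← dist_eq_norm, dist_comm]
  simpa using (ContinuousMap.dist_apply_le_dist ⟨z, hz⟩).trans_lt hdist

end Runge

lemma exists_polynomial_separating {X Y : Set ℂ} (hX : IsCompact X) (hY : IsCompact Y)
    (hXY : Disjoint X Y) (hXc : IsPreconnected Xᶜ) (hYc : IsPreconnected Yᶜ) {ε : ℝ} (hε : 0 < ε) :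
    ∃ q : Polynomial ℂ, (∀ z ∈ X, ‖q.eval z - 1‖ < ε) ∧ ∀ z ∈ Y, ‖q.eval z‖ < ε := by
  obtain ⟨U, V, hU, hV, hXU, hYV, hUV⟩ := SeparatedNhds.of_isCompact_isCompact hX hY hXY
  have hdiff : DifferentiableOn ℂ (indicator U 1) (U ∪ V) :=
    ((differentiableOn_const (1 : ℂ)).congr fun z hz ↦ indicator_of_mem hz 1).union_of_isOpen
      ((differentiableOn_const (0 : ℂ)).congr fun z hz ↦
        indicator_of_notMem (disjoint_right.1 hUV hz) 1) hU hV
  obtain ⟨q, hq⟩ := exists_polynomial_norm_sub_lt (hX.union hY)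
    (isPreconnected_compl_union hX.isClosed hY.isClosed hXY hXc hYc) (hU.union hV)
    (union_subset_union hXU hYV) hdiff hε
  refine ⟨q, fun z hz ↦ ?_, fun z hz ↦ ?_⟩
  · simpa [hXU hz] using hq z (.inl hz)
  · simpa [disjoint_right.1 hUV (hYV hz)] using hq z (.inr hz)

section PolyHull

open Bornology

lemma isBounded_image_of_continuous {E F : Type*} [PseudoMetricSpace E] [ProperSpace E]
    [PseudoMetricSpace F] {f : E → F} (hf : Continuous f) {K : Set E} (hK : IsBounded K) :
    IsBounded (f '' K) :=
  (hK.isCompact_closure.image hf).isBounded.subset (image_mono subset_closure)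

lemma subset_polyHull1 {A : Set ℂ} (hA : IsBounded A) : A ⊆ polyHull1 A := fun _ hz p ↦
  le_csSup (isBounded_image_of_continuous p.continuous.norm hA).bddAbove (mem_image_of_mem _ hz)

variable {n : ℕ}

lemma continuous_mvEval (F : MvPolynomial (Fin n) ℂ) : Continuous (mvEval F) :=
  MvPolynomial.continuous_eval F

lemma mvEval_aeval (p : MvPolynomial (Fin n) ℂ) (q : Polynomial ℂ) (w : Fin n → ℂ) :
    mvEval (Polynomial.aeval p q) w = q.eval (mvEval p w) := by
  have := Polynomial.aeval_algHom_apply (MvPolynomial.aeval w) p q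
  simpa [mvEval] using this.symm

variable {K K₁ K₂ : Set (Fin n → ℂ)} {z : Fin n → ℂ}

lemma bddAbove_norm_mvEval_image (hK : IsBounded K) (F : MvPolynomial (Fin n) ℂ) :
    BddAbove ((fun w ↦ ‖mvEval F w‖) '' K) :=
  (isBounded_image_of_continuous (continuous_mvEval F).norm hK).bddAbove

lemma polyHull_mono (hK₂ : IsBounded K₂) (h : K₁ ⊆ K₂) : polyHull K₁ ⊆ polyHull K₂ := by
  intro z hz F
  rcases K₁.eq_empty_or_nonempty with rfl | hne
  · simpa [mvEval, zero_lt_one.not_ge] using hz 1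
  · exact (hz F).trans
      (csSup_le_csSup (bddAbove_norm_mvEval_image hK₂ F) (hne.image _) (image_mono h))

lemma exists_mvEval_eq_one_of_notMem_polyHull (hK : IsBounded K) (hz : z ∉ polyHull K) {ε : ℝ}
    (hε : 0 < ε) :
    ∃ F : MvPolynomial (Fin n) ℂ, mvEval F z = 1 ∧ ∀ w ∈ K, ‖mvEval F w‖ < ε := by
  simp only [polyHull, mem_ofPred_eq, not_forall, not_le] at hz
  obtain ⟨f, hf⟩ := hz
  have hle (w) (hw : w ∈ K) := le_csSup (bddAbove_norm_mvEval_image hK f) (mem_image_of_mem _ hw)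
  have hpos : 0 < ‖mvEval f z‖ := by
    refine (Real.sSup_nonneg ?_).trans_lt hf
    rintro _ ⟨w, -, rfl⟩
    exact norm_nonneg _
  have hne : mvEval f z ≠ 0 := norm_pos_iff.1 hpos
  obtain ⟨N, hN⟩ := exists_pow_lt_of_lt_one hε ((div_lt_one hpos).2 hf)
  have heval (w) : mvEval ((MvPolynomial.C (mvEval f z)⁻¹ * f) ^ N) w =
      (mvEval f w / mvEval f z) ^ N := by
    simp [mvEval, div_eq_inv_mul]
  refine ⟨_, by rw [heval z, div_self hne, one_pow], fun w hw ↦ ?_⟩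
  rw [heval, norm_pow, norm_div]
  exact (pow_le_pow_left₀ (by positivity) (by gcongr; exact hle w hw) N).trans_lt hN

lemma notMem_polyHull_of_norm_mvEval_le {F : MvPolynomial (Fin n) ℂ} {c : ℝ} (hc : 0 ≤ c)
    (hF : ∀ w ∈ K, ‖mvEval F w‖ ≤ c) (hz : c < ‖mvEval F z‖) : z ∉ polyHull K := fun h ↦
  ((h F).trans (Real.sSup_le (forall_mem_image.2 hF) hc)).not_gt hz

lemma norm_mul_add_mul_one_sub_le {R : Type*} [SeminormedRing R] (a b e : R) :
    ‖a * e + b * (1 - e)‖ ≤ ‖a‖ + (‖a‖ + ‖b‖) * ‖e - 1‖ :=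
  calc ‖a * e + b * (1 - e)‖
      = ‖a + (a - b) * (e - 1)‖ := by noncomm_ring
    _ ≤ ‖a‖ + (‖a‖ + ‖b‖) * ‖e - 1‖ := by
        grw [norm_add_le, norm_mul_le, norm_sub_le]

lemma polyHull_union_of_forall_exists_mvEval_separating (hK₁ : IsBounded K₁) (hK₂ : IsBounded K₂)
    (hsep : ∀ ε > 0, ∃ e : MvPolynomial (Fin n) ℂ,
      (∀ w ∈ K₁, ‖mvEval e w - 1‖ < ε) ∧ ∀ w ∈ K₂, ‖mvEval e w‖ < ε) :
    polyHull (K₁ ∪ K₂) = polyHull K₁ ∪ polyHull K₂ := by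
  have hK : IsBounded (K₁ ∪ K₂) := hK₁.union hK₂
  refine Subset.antisymm (fun z hz ↦ ?_) (union_subset (polyHull_mono hK subset_union_left)
    (polyHull_mono hK subset_union_right))
  by_contra hz₁₂
  rw [mem_union, not_or] at hz₁₂
  have hquarter : (0 : ℝ) < 1 / 4 := by norm_num
  obtain ⟨F₁, hF₁z, hF₁⟩ := exists_mvEval_eq_one_of_notMem_polyHull hK₁ hz₁₂.1 hquarter
  obtain ⟨F₂, hF₂z, hF₂⟩ := exists_mvEval_eq_one_of_notMem_polyHull hK₂ hz₁₂.2 hquarter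
  obtain ⟨M, hM, hFM⟩ := (isBounded_image_of_continuous
    ((continuous_mvEval F₁).norm.add (continuous_mvEval F₂).norm) hK).exists_pos_norm_le
  replace hFM (w) (hw : w ∈ K₁ ∪ K₂) : ‖mvEval F₁ w‖ + ‖mvEval F₂ w‖ ≤ M :=
    (le_abs_self _).trans (hFM _ (mem_image_of_mem _ hw))
  obtain ⟨e, he₁, he₂⟩ := hsep (1 / (4 * M)) (by positivity)
  have hF (w) : mvEval (F₁ * e + F₂ * (1 - e)) w =
      mvEval F₁ w * mvEval e w + mvEval F₂ w * (1 - mvEval e w) := by simp [mvEval]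
  have hsmall {a b d : ℂ} (ha : ‖a‖ < 1 / 4) (hab : ‖a‖ + ‖b‖ ≤ M) (hd : ‖d - 1‖ < 1 / (4 * M)) :
      ‖a * d + b * (1 - d)‖ ≤ 1 / 2 :=
    calc ‖a * d + b * (1 - d)‖
        ≤ 1 / 4 + M * (1 / (4 * M)) := by grw [norm_mul_add_mul_one_sub_le, hab, ha, hd]
      _ = 1 / 2 := by field_simp; norm_num
  refine notMem_polyHull_of_norm_mvEval_le (F := F₁ * e + F₂ * (1 - e)) (c := 1 / 2) (by norm_num)
    (fun w hw ↦ ?_) (by norm_num [hF, hF₁z, hF₂z]) hz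
  rw [hF]
  rcases hw with hw | hw
  · exact hsmall (hF₁ w hw) (hFM w (.inl hw)) (he₁ w hw)
  · have := hsmall (hF₂ w hw) (add_comm ‖mvEval F₁ w‖ _ ▸ hFM w (.inr hw))
      (d := 1 - mvEval e w) (by simpa using he₂ w hw)
    rwa [sub_sub_cancel, add_comm] at this

theorem polyHull_union_eq_general (hK₁ : IsBounded K₁) (hK₂ : IsBounded K₂)
    (p : MvPolynomial (Fin n) ℂ)
    (hdisj : Disjoint (polyHull1 (mvEval p '' K₁)) (polyHull1 (mvEval p '' K₂))) :
    polyHull (K₁ ∪ K₂) = polyHull K₁ ∪ polyHull K₂ := by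
  refine polyHull_union_of_forall_exists_mvEval_separating hK₁ hK₂ fun ε hε ↦ ?_
  obtain ⟨q, hq₁, hq₂⟩ := exists_polynomial_separating (isCompact_polyHull1 _)
    (isCompact_polyHull1 _) hdisj (isPreconnected_compl_polyHull1 _)
    (isPreconnected_compl_polyHull1 _) hε
  have hmem {K : Set (Fin n → ℂ)} (hK : IsBounded K) {w} (hw : w ∈ K) :
      mvEval p w ∈ polyHull1 (mvEval p '' K) :=
    subset_polyHull1 (isBounded_image_of_continuous (continuous_mvEval p) hK)
      (mem_image_of_mem _ hw)
  refine ⟨Polynomial.aeval p q, fun w hw ↦ ?_, fun w hw ↦ ?_⟩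
  · exact mvEval_aeval p q w ▸ hq₁ _ (hmem hK₁ hw)
  · exact mvEval_aeval p q w ▸ hq₂ _ (hmem hK₂ hw)

end PolyHull

/-- if the hulls of `p(K₁)` and `p(K₂)` are disjoint then the hull of the
union is the union of the hulls. -/
theorem polyHull_union_eq (n : ℕ) (K₁ K₂ : Set (Fin n → ℂ))
    (hK₁ : IsCompact K₁) (hK₂ : IsCompact K₂)
    (p : MvPolynomial (Fin n) ℂ)
    (hdisj : Disjoint (polyHull1 (mvEval p '' K₁)) (polyHull1 (mvEval p '' K₂))) :
    polyHull (K₁ ∪ K₂) = polyHull K₁ ∪ polyHull K₂ :=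
  polyHull_union_eq_general hK₁.isBounded hK₂.isBounded p hdisj

end
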